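/- Let F be a local field with uniformizer ϖ and ring of integers O_F, let E/F be an unramified quadratic extension, and assume 2 ∈ O_F^×. In the quasi-split unitary similitude group GU₄(F) defined by the Hermitian matrix J = antidiag(1₂, 1₂), with H = GU₂ ×_μ GU₂ embedded block-wise and K the hyperspecial maximal compact subgroup, the four double cosets H τ_i K for i = 0,1,2,3 are pairwise disjoint, where τ₀ = 1, τ₁ = [[ϖ,0,0,−1],[0,ϖ,1,0],[0,0,1,0],[0,0,0,1]], τ₂ = [[ϖ²,0,0,−1],[0,ϖ²,1,0],[0,0,1,0],[0,0,0,1]], τ₃ = [[ϖ²,ϖ,1,−ϖ],[0,ϖ,1,0],[0,0,1,0],[0,0,−1,ϖ]]. -/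

import Mathlib

noncomputable section GU4Setup

variable {E : Type*} [Field E]

/-- The Hermitian matrix `J = antidiag(1₂, 1₂)`. -/
def Jherm : Matrix (Fin 4) (Fin 4) E :=
  !![0, 0, 1, 0; 0, 0, 0, 1; 1, 0, 0, 0; 0, 1, 0, 0]

/-- The `2×2` Hermitian matrix `J₂ = antidiag(1, 1)`. -/
def Jherm2 : Matrix (Fin 2) (Fin 2) E := !![0, 1; 1, 0]

/-- The embedding of a pair of `2×2` matrices via the planes `(e₁,e₃)` and `(e₂,e₄)`. -/
def embedPairU (A B : Matrix (Fin 2) (Fin 2) E) : Matrix (Fin 4) (Fin 4) E :=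
  !![A 0 0, 0, A 0 1, 0;
     0, B 0 0, 0, B 0 1;
     A 1 0, 0, A 1 1, 0;
     0, B 1 0, 0, B 1 1]

variable (F : Type*) [Field F] [Algebra F E] (γ : E ≃ₐ[F] E)

/-- The quasi-split unitary similitude group `GU₄(F)` (for the quadratic extension `E/F` with
Galois involution `γ`) as a set of matrices over `E`. -/
def GUSet : Set (Matrix (Fin 4) (Fin 4) E) :=
  {g | IsUnit g ∧ ∃ c : F, c ≠ 0 ∧
    (g.transpose.map γ) * Jherm * g = algebraMap F E c • Jherm}

/-- The subgroup `H = GU₂ ×_μ GU₂` of `GU₄(F)`, embedded block-wise. -/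
def HUSet : Set (Matrix (Fin 4) (Fin 4) E) :=
  {m | ∃ A B : Matrix (Fin 2) (Fin 2) E, ∃ c : F, c ≠ 0 ∧
    (A.transpose.map γ) * Jherm2 * A = algebraMap F E c • Jherm2 ∧
    (B.transpose.map γ) * Jherm2 * B = algebraMap F E c • Jherm2 ∧
    m = embedPairU A B}

/-- `K = GU₄(F) ∩ GL₄(O_E)`: integral elements with unit determinant. -/
def KUSet (v : Valuation E (WithZero (Multiplicative ℤ))) :
    Set (Matrix (Fin 4) (Fin 4) E) :=
  {g | g ∈ GUSet F γ ∧ (∀ i j, v (g i j) ≤ 1) ∧ v g.det = 1}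

/-- The elements `τ₀ = 1, τ₁, τ₂, τ₃`. -/
def tauU (π : E) : Fin 4 → Matrix (Fin 4) (Fin 4) E :=
  ![1,
    !![π, 0, 0, -1; 0, π, 1, 0; 0, 0, 1, 0; 0, 0, 0, 1],
    !![π ^ 2, 0, 0, -1; 0, π ^ 2, 1, 0; 0, 0, 1, 0; 0, 0, 0, 1],
    !![π ^ 2, π, 1, -π; 0, π, 1, 0; 0, 0, 1, 0; 0, 0, -1, π]]

end GU4Setup

section Helpers

variable {E : Type*} [Field E]

/-- The element whose centralizer contains `H`. -/
def sgnM : Matrix (Fin 4) (Fin 4) E :=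
  !![1, 0, 0, 0; 0, -1, 0, 0; 0, 0, 1, 0; 0, 0, 0, -1]

/-- The conjugates `τᵢ⁻¹ s τᵢ`. -/
def conjX (π : E) : Fin 4 → Matrix (Fin 4) (Fin 4) E :=
  ![sgnM,
    !![1, 0, 0, -2 * π⁻¹; 0, -1, -2 * π⁻¹, 0; 0, 0, 1, 0; 0, 0, 0, -1],
    !![1, 0, 0, -2 * π⁻¹ ^ 2; 0, -1, -2 * π⁻¹ ^ 2, 0; 0, 0, 1, 0; 0, 0, 0, -1],
    !![1, 2 * π⁻¹, 4 * π⁻¹ ^ 2, -2 * π⁻¹; 0, -1, -2 * π⁻¹, 0; 0, 0, 1, 0; 0, 0, 2 * π⁻¹, -1]]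

theorem tau_conj (π : E) (hπ : π ≠ 0) (i : Fin 4) :
    sgnM * tauU π i = tauU π i * conjX π i := by
  fin_cases i
  · simp [tauU, conjX]
  all_goals
    ext a b
    fin_cases a <;> fin_cases b <;>
      simp [tauU, conjX, sgnM, Matrix.mul_apply, Fin.sum_univ_four] <;> field_simp <;> ring

theorem embed_comm (A B : Matrix (Fin 2) (Fin 2) E) :
    sgnM * embedPairU A B = embedPairU A B * sgnM := by
  ext a b
  fin_cases a <;> fin_cases b <;>
    simp [embedPairU, sgnM, Matrix.mul_apply, Fin.sum_univ_four]

theorem tau_unit (π : E) (hπ : π ≠ 0) (i : Fin 4) : IsUnit (tauU π i) := by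
  rw [Matrix.isUnit_iff_isUnit_det, isUnit_iff_ne_zero]
  fin_cases i <;>
    simp [tauU, Matrix.det_succ_row_zero, Fin.sum_univ_succ, Fin.succAbove, hπ]

theorem det_embed (A B : Matrix (Fin 2) (Fin 2) E) :
    (embedPairU A B).det = A.det * B.det := by
  simp [embedPairU, Matrix.det_succ_row_zero, Fin.sum_univ_succ, Fin.succAbove]
  ring

theorem det_ne_two (F : Type*) [Field F] [Algebra F E] (γ : E ≃ₐ[F] E)
    (A : Matrix (Fin 2) (Fin 2) E) (c : F) (hc : c ≠ 0)
    (h : (A.transpose.map γ) * Jherm2 * A = algebraMap F E c • Jherm2) : A.det ≠ 0 := by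
  intro h0
  have := congrArg Matrix.det h
  rw [Matrix.det_mul, h0, mul_zero, Matrix.det_smul] at this
  simp [Jherm2, Matrix.det_fin_two, hc] at this

theorem H_unit (F : Type*) [Field F] [Algebra F E] (γ : E ≃ₐ[F] E)
    {h : Matrix (Fin 4) (Fin 4) E} (hh : h ∈ HUSet F γ) :
    IsUnit h ∧ sgnM * h = h * sgnM := by
  obtain ⟨A, B, c, hc, hA, hB, rfl⟩ := hh
  refine ⟨?_, embed_comm A B⟩
  rw [Matrix.isUnit_iff_isUnit_det, isUnit_iff_ne_zero, det_embed]
  exact mul_ne_zero (det_ne_two F γ A c hc hA) (det_ne_two F γ B c hc hB)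

variable (v : Valuation E (WithZero (Multiplicative ℤ)))

theorem mul_bound {M N : Matrix (Fin 4) (Fin 4) E} {r s : WithZero (Multiplicative ℤ)}
    (hM : ∀ i j, v (M i j) ≤ r) (hN : ∀ i j, v (N i j) ≤ s) (i j : Fin 4) :
    v ((M * N) i j) ≤ r * s := by
  rw [Matrix.mul_apply]
  refine Valuation.map_sum_le v fun k _ => ?_
  rw [map_mul]
  exact mul_le_mul' (hM i k) (hN k j)

theorem det_bound {M : Matrix (Fin 4) (Fin 4) E} (hM : ∀ i j, v (M i j) ≤ 1) : v M.det ≤ 1 := by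
  rw [Matrix.det_apply]
  refine Valuation.map_sum_le v fun σ _ => ?_
  have h1 : v (∏ i, M (σ i) i) ≤ 1 := by
    rw [map_prod]
    exact Finset.prod_le_one' fun i _ => hM _ _
  rcases Int.units_eq_one_or (Equiv.Perm.sign σ) with h | h <;> rw [h] <;>
    simpa using h1

theorem inv_bound {M : Matrix (Fin 4) (Fin 4) E} (hM : ∀ i j, v (M i j) ≤ 1)
    (hd : v M.det = 1) (i j : Fin 4) : v (M⁻¹ i j) ≤ 1 := by
  rw [Matrix.inv_def, Matrix.smul_apply, smul_eq_mul, map_mul, Ring.inverse_eq_inv', map_inv₀,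
    hd, inv_one, one_mul, Matrix.adjugate_apply]
  refine det_bound v fun a b => ?_
  rw [Matrix.updateRow_apply]
  split_ifs
  · by_cases h : b = i
    · subst h; simp
    · simp [Pi.single_apply, h]
  · exact hM a b

theorem exists_conj (F : Type*) [Field F] [Algebra F E] (γ : E ≃ₐ[F] E) (π : E) (hπ : π ≠ 0)
    (i j : Fin 4) (m : Matrix (Fin 4) (Fin 4) E)
    (hi : ∃ h ∈ HUSet F γ, ∃ k ∈ KUSet F γ v, m = h * tauU π i * k)
    (hj : ∃ h ∈ HUSet F γ, ∃ k ∈ KUSet F γ v, m = h * tauU π j * k) :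
    ∃ u w : Matrix (Fin 4) (Fin 4) E, (∀ a b, v (u a b) ≤ 1) ∧ (∀ a b, v (w a b) ≤ 1) ∧
      conjX π j = u * conjX π i * w := by
  obtain ⟨h, hh, k, hk, e⟩ := hi
  obtain ⟨h', hh', k', hk', e'⟩ := hj
  have key : ∀ (i : Fin 4) (h k : Matrix (Fin 4) (Fin 4) E), h ∈ HUSet F γ → k ∈ KUSet F γ v →
      m = h * tauU π i * k → IsUnit m ∧ sgnM * m = m * (k⁻¹ * conjX π i * k) := by
    intro i h k hh hk e
    have hku : IsUnit k := hk.1.1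
    obtain ⟨hu, hc⟩ := H_unit F γ hh
    refine ⟨e ▸ (hu.mul (tau_unit π hπ i)).mul hku, ?_⟩
    have hkd : IsUnit k.det := (Matrix.isUnit_iff_isUnit_det _).1 hku
    calc sgnM * m = (sgnM * h) * tauU π i * k := by rw [e]; simp only [Matrix.mul_assoc]
      _ = h * (sgnM * tauU π i) * k := by rw [hc]; simp only [Matrix.mul_assoc]
      _ = h * tauU π i * (k * k⁻¹) * conjX π i * k := by
        rw [tau_conj π hπ, Matrix.mul_nonsing_inv _ hkd]
        simp only [Matrix.mul_assoc, Matrix.one_mul]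
      _ = _ := by rw [e]; simp only [Matrix.mul_assoc]
  obtain ⟨mu, e1⟩ := key i h k hh hk e
  obtain ⟨-, e2⟩ := key j h' k' hh' hk' e'
  have e3 := mu.mul_left_cancel (e1.symm.trans e2)
  have hkd : IsUnit k'.det := (Matrix.isUnit_iff_isUnit_det _).1 hk'.1.1
  refine ⟨k' * k⁻¹, k * k'⁻¹, ?_, ?_, ?_⟩
  · intro a b
    simpa using mul_bound v hk'.2.1 (inv_bound v hk.2.1 hk.2.2) a b
  · intro a b
    simpa using mul_bound v hk.2.1 (inv_bound v hk'.2.1 hk'.2.2) a b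
  · calc conjX π j = (k' * k'⁻¹) * conjX π j * (k' * k'⁻¹) := by
          rw [Matrix.mul_nonsing_inv _ hkd]; simp
      _ = k' * (k'⁻¹ * conjX π j * k') * k'⁻¹ := by simp only [Matrix.mul_assoc]
      _ = _ := by rw [← e3]; simp only [Matrix.mul_assoc]

theorem conj_bound {u w X : Matrix (Fin 4) (Fin 4) E} {r : WithZero (Multiplicative ℤ)}
    (hu : ∀ a b, v (u a b) ≤ 1) (hw : ∀ a b, v (w a b) ≤ 1) (hX : ∀ a b, v (X a b) ≤ r)
    (a b : Fin 4) : v ((u * X * w) a b) ≤ r := by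
  simpa using mul_bound v (mul_bound v hu hX) hw a b

/-- The part of `conjX π 3` with a pole of order at most one. -/
def restX (π : E) : Matrix (Fin 4) (Fin 4) E :=
  !![1, 2 * π⁻¹, 0, -2 * π⁻¹; 0, -1, -2 * π⁻¹, 0; 0, 0, 1, 0; 0, 0, 2 * π⁻¹, -1]

theorem conj_three (π : E) (u w : Matrix (Fin 4) (Fin 4) E) (a b : Fin 4) :
    (u * conjX π 3 * w) a b = u a 0 * (4 * π⁻¹ ^ 2) * w 2 b + (u * restX π * w) a b := by
  simp [conjX, restX, Matrix.mul_apply, Fin.sum_univ_four]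
  ring

theorem not_three_two (π : E) (q : WithZero (Multiplicative ℤ)) (hq : v π⁻¹ = q) (hq1 : 1 < q)
    (h2 : v (2 : E) = 1) (u w : Matrix (Fin 4) (Fin 4) E)
    (hu : ∀ a b, v (u a b) ≤ 1) (hw : ∀ a b, v (w a b) ≤ 1) :
    conjX π 2 ≠ u * conjX π 3 * w := by
  intro h
  have hr : ∀ a b, v ((u * restX π * w) a b) ≤ q := by
    refine conj_bound v hu hw fun a b => ?_
    fin_cases a <;> fin_cases b <;> simp [restX, hq, h2, hq1.le] <;> exact hq.le
  have hz : ∀ a b, conjX π 2 a b = 0 → v (u a 0 * (4 * π⁻¹ ^ 2) * w 2 b) ≤ q := by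
    intro a b h0
    have := congrFun (congrFun h a) b
    rw [conj_three, h0] at this
    rw [eq_neg_of_add_eq_zero_left this.symm, Valuation.map_neg]
    exact hr a b
  have hqq : q < q ^ 2 := by
    rw [pow_two]
    exact lt_mul_of_one_lt_left (zero_lt_one.trans hq1) hq1
  have hn : ∀ a b, v (conjX π 2 a b) = q ^ 2 → v (u a 0 * (4 * π⁻¹ ^ 2) * w 2 b) = q ^ 2 := by
    intro a b h0
    have := congrFun (congrFun h a) b
    rw [conj_three] at this
    rw [eq_sub_of_add_eq this.symm, Valuation.map_sub_eq_of_lt_left, h0]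
    rw [h0]
    exact (hr a b).trans_lt hqq
  have a1 := hz 0 2 (by simp [conjX])
  have a2 := hz 1 3 (by simp [conjX])
  have a3 := hn 0 3 (by simp [conjX, h2, ← hq])
  have a4 := hn 1 2 (by simp [conjX, h2, ← hq])
  have e : v (u 0 0 * (4 * π⁻¹ ^ 2) * w 2 2) * v (u 1 0 * (4 * π⁻¹ ^ 2) * w 2 3)
      = v (u 0 0 * (4 * π⁻¹ ^ 2) * w 2 3) * v (u 1 0 * (4 * π⁻¹ ^ 2) * w 2 2) := by
    rw [← map_mul, ← map_mul]
    congr 1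
    ring
  rw [a3, a4] at e
  have h5 := mul_le_mul' a1 a2
  rw [e] at h5
  exact absurd h5 (not_le.2 (mul_lt_mul'' hqq hqq zero_le' zero_le'))

theorem no_conj (π : E) (q : WithZero (Multiplicative ℤ)) (hq : v π⁻¹ = q) (hq1 : 1 < q)
    (h2 : v (2 : E) = 1) (u w : Matrix (Fin 4) (Fin 4) E)
    (hu : ∀ a b, v (u a b) ≤ 1) (hw : ∀ a b, v (w a b) ≤ 1) (i j : Fin 4)
    (hij : (i = 0 ∧ j ≠ 0) ∨ (i = 1 ∧ (j = 2 ∨ j = 3)) ∨ (i = 3 ∧ j = 2)) :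
    conjX π j ≠ u * conjX π i * w := by
  have hqq : q < q ^ 2 := by
    rw [pow_two]
    exact lt_mul_of_one_lt_left (zero_lt_one.trans hq1) hq1
  have h4 : v (4 : E) = 1 := by
    rw [show (4 : E) = 2 * 2 by norm_num, map_mul, h2, one_mul]
  have c1 : v (conjX π 1 0 3) = q := by simp [conjX, h2, ← hq]
  have c2 : v (conjX π 2 0 3) = q ^ 2 := by simp [conjX, h2, ← hq]
  have c3 : v (conjX π 3 0 2) = q ^ 2 := by simp [conjX, h4, ← hq]
  have b0 : ∀ a b, v (conjX π 0 a b) ≤ 1 := by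
    intro a b
    fin_cases a <;> fin_cases b <;> simp [conjX, sgnM]
  have b1 : ∀ a b, v (conjX π 1 a b) ≤ q := by
    intro a b
    fin_cases a <;> fin_cases b <;> simp [conjX, hq, h2, hq1.le] <;> exact hq.le
  intro h
  rcases hij with ⟨rfl, hj⟩ | ⟨rfl, rfl | rfl⟩ | ⟨rfl, rfl⟩
  · have hb := conj_bound v hu hw b0
    rw [← h] at hb
    have : j = 1 ∨ j = 2 ∨ j = 3 := by omega
    rcases this with rfl | rfl | rfl
    · exact absurd (c1 ▸ hb 0 3) (not_le.2 hq1)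
    · exact absurd (c2 ▸ hb 0 3) (not_le.2 (hq1.trans hqq))
    · exact absurd (c3 ▸ hb 0 2) (not_le.2 (hq1.trans hqq))
  · have hb := conj_bound v hu hw b1
    rw [← h] at hb
    exact absurd (c2 ▸ hb 0 3) (not_le.2 hqq)
  · have hb := conj_bound v hu hw b1
    rw [← h] at hb
    exact absurd (c3 ▸ hb 0 2) (not_le.2 hqq)
  · exact not_three_two v π q hq hq1 h2 u w hu hw h

end Helpers

/-- For the unramified quadratic extension `E/F` of local fields with `2 ∈ O_F^×`, the four
double cosets `H τᵢ K`, `i = 0, 1, 2, 3`, in the quasi-split unitary similitude group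
`GU₄(F)` are pairwise disjoint. -/
theorem gu4_double_cosets_disjoint
    {E : Type*} [Field E] (F : Type*) [Field F] [Algebra F E] [IsGalois F E]
    (hdeg : Module.finrank F E = 2)
    (γ : E ≃ₐ[F] E) (hγ : γ ≠ AlgEquiv.refl)
    (v : Valuation E (WithZero (Multiplicative ℤ)))
    (hvγ : ∀ x : E, v (γ x) = v x)
    (ϖ : F)
    (hϖ : v (algebraMap F E ϖ) = ((Multiplicative.ofAdd (-1 : ℤ) : Multiplicative ℤ) :
      WithZero (Multiplicative ℤ)))
    (h2 : v (2 : E) = 1) :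
    ∀ i j : Fin 4, i ≠ j →
      Disjoint
        {m | ∃ h ∈ HUSet F γ, ∃ k ∈ KUSet F γ v,
          m = h * tauU (algebraMap F E ϖ) i * k}
        {m | ∃ h ∈ HUSet F γ, ∃ k ∈ KUSet F γ v,
          m = h * tauU (algebraMap F E ϖ) j * k} := by
  intro i j hij
  rw [Set.disjoint_left]
  intro m hi hj
  have hπ : algebraMap F E ϖ ≠ 0 := by
    intro h
    rw [h, map_zero] at hϖ
    exact WithZero.coe_ne_zero hϖ.symm
  have hq1 : 1 < v (algebraMap F E ϖ)⁻¹ := by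
    rw [map_inv₀, hϖ, ← WithZero.coe_inv, ← WithZero.coe_one, WithZero.coe_lt_coe,
      ← ofAdd_neg, ← ofAdd_zero, Multiplicative.ofAdd_lt]
    norm_num
  obtain ⟨u, w, hu, hw, e⟩ := exists_conj v F γ _ hπ i j m hi hj
  obtain ⟨u', w', hu', hw', e'⟩ := exists_conj v F γ _ hπ j i m hj hi
  have hc : ((i = 0 ∧ j ≠ 0) ∨ (i = 1 ∧ (j = 2 ∨ j = 3)) ∨ (i = 3 ∧ j = 2)) ∨
      ((j = 0 ∧ i ≠ 0) ∨ (j = 1 ∧ (i = 2 ∨ i = 3)) ∨ (j = 3 ∧ i = 2)) := by omega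
  rcases hc with hc | hc
  · exact no_conj v _ _ rfl hq1 h2 u w hu hw i j hc e
  · exact no_conj v _ _ rfl hq1 h2 u' w' hu' hw' j i hc e'
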